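/- Let G be an antisymmetric 2d×2d matrix (d ≥ 2) over a commutative ℚ-algebra satisfying the 3-term identity G_{ij}G_{kl} - G_{ik}G_{jl} + G_{il}G_{jk} = 0 for all i,j,k,l. Then the alternating sum Σ_{σ ∈ S_{2d}} sgn(σ) G_{σ(1)σ(2)} G_{σ(3)σ(4)} H^3_{σ(5)σ(6)} ⋯ H^d_{σ(2d-1)σ(2d)} vanishes for arbitrary matrices H^3, ..., H^d. -/

import Mathlib

/-!
Let `S` be the alternating sum. Only the first four slots of `σ` enter the two `G` factors, and the
remaining product `P σ` does not change when those four slots are permuted. Reindexing by the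
transposition of slots `1, 2` turns `G_{01} G_{23}` into `G_{02} G_{13}` at the cost of a sign, and
a further transposition of slots `2, 3` turns this into `G_{03} G_{12}` with another sign. Hence
the three alternating sums are `S`, `-S` and `S`, and summing the 3-term identity over all `σ`
gives `S + S + S = 0`. Since `3` is invertible in a `ℚ`-algebra, `S = 0`.
-/
open scoped BigOperators Matrix

theorem sum_sign_smul_mul_swap {α R : Type*} [Fintype α] [DecidableEq α] [CommRing R]
    {i j : α} (hij : i ≠ j) (X : Equiv.Perm α → R) :
    ∑ σ : Equiv.Perm α, (Equiv.Perm.sign σ : ℤ) • X (σ * Equiv.swap i j) =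
      -∑ σ : Equiv.Perm α, (Equiv.Perm.sign σ : ℤ) • X σ := by
  rw [← Equiv.sum_comp (Equiv.mulRight (Equiv.swap i j))
    (fun σ : Equiv.Perm α => (Equiv.Perm.sign σ : ℤ) • X σ), ← Finset.sum_neg_distrib]
  refine Finset.sum_congr rfl fun σ _ => ?_
  simp [Equiv.Perm.sign_swap hij]

/-- The cancellation with the product of the `H`s replaced by any function `P` invariant under the
transpositions `(b c)` and `(c e)` of slots. -/
theorem sum_sign_smul_eq_zero {α R : Type*} [Fintype α] [DecidableEq α] [CommRing R] [Algebra ℚ R]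
    (G : Matrix α α R)
    (hG : ∀ i j k l : α, G i j * G k l - G i k * G j l + G i l * G j k = 0)
    {a b c e : α} (hab : a ≠ b) (hac : a ≠ c) (hae : a ≠ e) (hbc : b ≠ c) (hbe : b ≠ e)
    (hce : c ≠ e) (P : Equiv.Perm α → R)
    (hP₁ : ∀ σ, P (σ * Equiv.swap b c) = P σ) (hP₂ : ∀ σ, P (σ * Equiv.swap c e) = P σ) :
    ∑ σ : Equiv.Perm α, (Equiv.Perm.sign σ : ℤ) •
      (G (σ a) (σ b) * G (σ c) (σ e) * P σ) = 0 := by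
  have h₁ := sum_sign_smul_mul_swap hbc
    (fun σ : Equiv.Perm α => G (σ a) (σ b) * G (σ c) (σ e) * P σ)
  have h₂ := sum_sign_smul_mul_swap hce
    (fun σ : Equiv.Perm α => G (σ a) (σ c) * G (σ b) (σ e) * P σ)
  simp only [hP₁, Equiv.Perm.mul_apply, Equiv.swap_apply_left, Equiv.swap_apply_right,
    Equiv.swap_apply_of_ne_of_ne hab hac, Equiv.swap_apply_of_ne_of_ne hbe.symm hce.symm] at h₁
  simp only [hP₂, Equiv.Perm.mul_apply, Equiv.swap_apply_left, Equiv.swap_apply_right,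
    Equiv.swap_apply_of_ne_of_ne hac hae, Equiv.swap_apply_of_ne_of_ne hbc hbe] at h₂
  have h₃ : ∑ σ : Equiv.Perm α, (Equiv.Perm.sign σ : ℤ) •
        (G (σ a) (σ b) * G (σ c) (σ e) * P σ)
      - ∑ σ : Equiv.Perm α, (Equiv.Perm.sign σ : ℤ) •
        (G (σ a) (σ c) * G (σ b) (σ e) * P σ)
      + ∑ σ : Equiv.Perm α, (Equiv.Perm.sign σ : ℤ) •
        (G (σ a) (σ e) * G (σ b) (σ c) * P σ) = 0 := by
    rw [← Finset.sum_sub_distrib, ← Finset.sum_add_distrib]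
    refine Finset.sum_eq_zero fun σ _ => ?_
    rw [← smul_sub, ← smul_add, ← sub_mul, ← add_mul, hG, zero_mul, smul_zero]
  rw [h₂, h₁] at h₃
  generalize (∑ σ : Equiv.Perm α, (Equiv.Perm.sign σ : ℤ) •
    (G (σ a) (σ b) * G (σ c) (σ e) * P σ)) = S at h₃ ⊢
  have h₄ : (3 : ℚ) • S = 0 := by
    rw [Algebra.smul_def, map_ofNat]
    linear_combination h₃
  exact (smul_eq_zero_iff_right (by norm_num)).1 h₄



/-- Self-interaction cancellation: if an antisymmetric `G` satisfies the 3-term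
Plücker-type identity, then the alternating permutation sum whose first two
factors are both `G` vanishes, for arbitrary remaining matrices `H`. -/
theorem stmt5 {R : Type*} [CommRing R] [Algebra ℚ R] {d : ℕ} (hd : 2 ≤ d)
    (G : Matrix (Fin (2 * d)) (Fin (2 * d)) R) (hGa : Gᵀ = -G)
    (hG : ∀ i j k l : Fin (2 * d),
      G i j * G k l - G i k * G j l + G i l * G j k = 0)
    (H : Fin (d - 2) → Matrix (Fin (2 * d)) (Fin (2 * d)) R) :
    ∑ σ : Equiv.Perm (Fin (2 * d)), (Equiv.Perm.sign σ : ℤ) •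
      (G (σ ⟨0, by omega⟩) (σ ⟨1, by omega⟩) *
       G (σ ⟨2, by omega⟩) (σ ⟨3, by omega⟩) *
       ∏ p : Fin (d - 2),
         H p (σ ⟨2 * p + 4, by have := p.isLt; omega⟩)
             (σ ⟨2 * p + 5, by have := p.isLt; omega⟩)) = 0 := by
  refine sum_sign_smul_eq_zero G hG (a := ⟨0, by omega⟩) (b := ⟨1, by omega⟩)
    (c := ⟨2, by omega⟩) (e := ⟨3, by omega⟩) (by simp) (by simp) (by simp) (by simp) (by simp)
    (by simp) (fun σ => ∏ p : Fin (d - 2), H p (σ ⟨2 * p + 4, by have := p.isLt; omega⟩)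
      (σ ⟨2 * p + 5, by have := p.isLt; omega⟩)) (fun σ => ?_) (fun σ => ?_)
  all_goals
    refine Finset.prod_congr rfl fun p _ => ?_
    rw [Equiv.Perm.mul_apply, Equiv.Perm.mul_apply, Equiv.swap_apply_of_ne_of_ne,
      Equiv.swap_apply_of_ne_of_ne] <;> simp only [ne_eq, Fin.mk.injEq] <;> omega
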